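/- Let $m,n \in \mathbb{N}$. A symmetric tensor $\mathcal{A} = (a_{i_1\dots i_m})$ is GDD$^+$ (generalized diagonally dominant with nonnegative diagonal) if and only if there exist nonnegative reals $b^{\vec{i}}_j$ for each nondecreasing non-constant multi-index $\vec{i} = (i_1,\dots,i_m)$ and each $j \in \{i_1,\dots,i_m\}$, such that: (i) for each such $\vec{i}$ with tight pair $((j_1,\dots,j_l),(\alpha_1,\dots,\alpha_l))$, $\prod_{k=1}^l (b^{\vec{i}}_{j_k})^{\alpha_k} \geq c(\vec{i}) |a_{\vec{i}}|^m$ with $c(\vec{i}) = \prod_{k=1}^l \binom{m-1}{\alpha - e_k}^{\alpha_k}$; and (ii) for each $j \in [n]$, $a_{jj\dots j} \geq \sum_{\vec{i}: j \in \vec{i}} b^{\vec{i}}_j$. -/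

import Mathlib

open Finset

/-- An index of an `m`-order `n`-dimensional tensor. -/
abbrev Idx (m n : ℕ) := Fin m → Fin n

/-- The diagonal index `(i, i, …, i)`. -/
def diagIdx {m n : ℕ} (i : Fin n) : Idx m n := fun _ => i

/-- A tensor is symmetric if its entries are invariant under permutations of the indices. -/
def IsSymmetric {m n : ℕ} (A : Idx m n → ℝ) : Prop :=
  ∀ (σ : Equiv.Perm (Fin m)) (j : Idx m n), A (j ∘ σ) = A j

/-- The sum of the absolute values of the off-diagonal entries on the `i`-th slice. -/
def rowSum {m n : ℕ} (hm : 0 < m) (A : Idx m n → ℝ) (i : Fin n) : ℝ :=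
  ∑ j ∈ Finset.univ.filter (fun j : Idx m n => j ⟨0, hm⟩ = i ∧ j ≠ diagIdx i), |A j|

/-- A tensor is diagonally dominant if each diagonal entry dominates (in absolute value)
the sum of the absolute values of the off-diagonal entries on its slice. -/
def IsDD {m n : ℕ} (hm : 0 < m) (A : Idx m n → ℝ) : Prop :=
  ∀ i : Fin n, rowSum hm A i ≤ |A (diagIdx i)|

/-- `A` is a symmetric generalized diagonally dominant tensor with nonnegative diagonal:
there is a positive diagonal scaling making it diagonally dominant. -/
def IsGDDplus {m n : ℕ} (hm : 0 < m) (A : Idx m n → ℝ) : Prop :=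
  IsSymmetric A ∧ (∀ i : Fin n, 0 ≤ A (diagIdx i)) ∧
    ∃ d : Fin n → ℝ, (∀ i, 0 < d i) ∧ IsDD hm (fun j => A j * ∏ k : Fin m, d (j k))

/-- The set of distinct values appearing in the multi-index `jh` (the tight index). -/
def suppIdx {m n : ℕ} (jh : Idx m n) : Finset (Fin n) := Finset.image jh Finset.univ

/-- The multiplicity of the value `p` in the multi-index `jh` (the tight power). -/
def multIdx {m n : ℕ} (jh : Idx m n) (p : Fin n) : ℕ :=
  (Finset.univ.filter fun k : Fin m => jh k = p).card

/-- The constant `c = ∏_k (m-1 choose α - e_k)^{α_k}` associated with a multi-index. -/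
def cCoef {m n : ℕ} (jh : Idx m n) : ℕ :=
  ∏ p ∈ suppIdx jh,
    (Nat.multinomial (suppIdx jh)
      (fun q => if q = p then multIdx jh q - 1 else multIdx jh q)) ^ (multIdx jh p)


/-- number of rearrangements -/
def kCoef {m n : ℕ} (jh : Idx m n) : ℕ := Nat.multinomial (suppIdx jh) (multIdx jh)

/-- the multinomial coefficient `(m-1 choose α - e_p)` -/
def mCoef {m n : ℕ} (jh : Idx m n) (p : Fin n) : ℕ :=
  Nat.multinomial (suppIdx jh) (fun q => if q = p then multIdx jh q - 1 else multIdx jh q)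

lemma mem_suppIdx {m n : ℕ} (jh : Idx m n) (k : Fin m) : jh k ∈ suppIdx jh := by
  simp [suppIdx]

lemma multIdx_pos {m n : ℕ} {jh : Idx m n} {p : Fin n} (hp : p ∈ suppIdx jh) :
    0 < multIdx jh p := by
  simp only [suppIdx, Finset.mem_image, Finset.mem_univ, true_and] at hp
  obtain ⟨k, hk⟩ := hp
  exact Finset.card_pos.2 ⟨k, by simp [hk]⟩

lemma multIdx_zero {m n : ℕ} {jh : Idx m n} {p : Fin n} (hp : p ∉ suppIdx jh) :
    multIdx jh p = 0 := by
  simp only [suppIdx, Finset.mem_image, Finset.mem_univ, true_and] at hp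
  push Not at hp
  simp only [multIdx, Finset.card_eq_zero]
  ext k; simp [hp k]

lemma sum_multIdx {m n : ℕ} (jh : Idx m n) : ∑ p ∈ suppIdx jh, multIdx jh p = m := by
  have := Finset.sum_comp (s := Finset.univ) (fun _ : Fin n => 1) jh
  simp at this
  simpa [suppIdx, multIdx] using this.symm

lemma prod_suppIdx {m n : ℕ} (jh : Idx m n) (f : Fin n → ℝ) :
    ∏ p ∈ suppIdx jh, f p ^ multIdx jh p = ∏ k, f (jh k) :=
  (Finset.prod_comp (s := Finset.univ) f jh).symm

lemma sum_suppIdx {m n : ℕ} (jh : Idx m n) (f : Fin n → ℝ) :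
    ∑ p ∈ suppIdx jh, (multIdx jh p : ℝ) * f p = ∑ k, f (jh k) := by
  have := (Finset.sum_comp (s := Finset.univ) f jh).symm
  simpa [nsmul_eq_mul, suppIdx, multIdx] using this

lemma multIdx_perm {m n : ℕ} (j : Idx m n) (σ : Equiv.Perm (Fin m)) (p : Fin n) :
    multIdx (j ∘ σ) p = multIdx j p := by
  unfold multIdx
  refine Finset.card_bij (fun k _ => σ k) ?_ ?_ ?_
  · intro a ha; simpa using ha
  · intro a _ b _ h; exact σ.injective h
  · intro b hb; exact ⟨σ.symm b, by simpa using hb, by simp⟩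

lemma kCoef_mul {m n : ℕ} {jh : Idx m n} {p : Fin n} (hp : p ∈ suppIdx jh) :
    kCoef jh * multIdx jh p = m * mCoef jh p := by
  have hpos := multIdx_pos hp
  have h1 := Nat.multinomial_spec (suppIdx jh) (multIdx jh)
  have h2 := Nat.multinomial_spec (suppIdx jh)
    (fun q => if q = p then multIdx jh q - 1 else multIdx jh q)
  rw [sum_multIdx] at h1
  have hs := sum_multIdx jh
  rw [← Finset.add_sum_erase _ _ hp] at h2 hs
  rw [← Finset.mul_prod_erase _ _ hp] at h1 h2
  have e1 : ∏ q ∈ (suppIdx jh).erase p,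
      (if q = p then multIdx jh q - 1 else multIdx jh q).factorial =
      ∏ q ∈ (suppIdx jh).erase p, (multIdx jh q).factorial := by
    refine Finset.prod_congr rfl fun q hq => ?_
    rw [if_neg (Finset.ne_of_mem_erase hq)]
  have e2 : ∑ q ∈ (suppIdx jh).erase p,
      (if q = p then multIdx jh q - 1 else multIdx jh q) =
      ∑ q ∈ (suppIdx jh).erase p, multIdx jh q := by
    refine Finset.sum_congr rfl fun q hq => ?_
    rw [if_neg (Finset.ne_of_mem_erase hq)]
  rw [e1, e2] at h2
  simp only [if_true] at h2
  change _ * kCoef jh = _ at h1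
  change _ * mCoef jh p = _ at h2
  set P := ∏ q ∈ (suppIdx jh).erase p, (multIdx jh q).factorial with hP
  set S := ∑ q ∈ (suppIdx jh).erase p, multIdx jh q with hS
  have hPpos : 0 < P := Finset.prod_pos fun q _ => Nat.factorial_pos _
  obtain ⟨a, ha⟩ : ∃ a, multIdx jh p = a + 1 := ⟨multIdx jh p - 1, by omega⟩
  rw [ha] at h1 h2 hs ⊢
  simp only [Nat.add_sub_cancel] at h2
  have hm : m = (a + S) + 1 := by omega
  have hf : 0 < a.factorial := Nat.factorial_pos a
  have hmf : m.factorial = (a + S + 1) * (a + S).factorial := by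
    conv_lhs => rw [hm]
    rw [Nat.factorial_succ]
  rw [hmf, Nat.factorial_succ, ← h2] at h1
  have : (a.factorial * P) * (kCoef jh * (a + 1)) = (a.factorial * P) * (m * mCoef jh p) := by
    rw [show m * mCoef jh p = (a + S + 1) * mCoef jh p by rw [← hm]]
    linarith
  exact Nat.eq_of_mul_eq_mul_left (Nat.mul_pos hf hPpos) this

lemma card_class {m n : ℕ} (jh : Idx m n) :
    ((Finset.univ : Finset (Equiv.Perm (Fin m))).image (fun σ : Equiv.Perm (Fin m) => jh ∘ σ)).card = kCoef jh := by
  set O := (Finset.univ : Finset (Equiv.Perm (Fin m))).image (fun σ : Equiv.Perm (Fin m) => jh ∘ σ) with hO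
  have h1 := Finset.card_eq_sum_card_image (fun σ : Equiv.Perm (Fin m) => jh ∘ σ) Finset.univ
  have h2 : ∀ j ∈ O, (Finset.univ.filter fun σ : Equiv.Perm (Fin m) => jh ∘ σ = j).card =
      ∏ p ∈ suppIdx jh, (multIdx jh p).factorial := by
    intro j hj
    simp only [hO, Finset.mem_image, Finset.mem_univ, true_and] at hj
    obtain ⟨τ, rfl⟩ := hj
    have h3 := DomMulAct.stabilizer_card' jh
    rw [Fintype.card_subtype] at h3
    simp only [Fintype.card_subtype] at h3
    change _ = ∏ p ∈ suppIdx jh, (multIdx jh p).factorial at h3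
    rw [← h3]
    refine Finset.card_bij (fun σ _ => σ * τ⁻¹) ?_ ?_ ?_
    · intro σ hσ
      simp only [Finset.mem_filter, Finset.mem_univ, true_and] at hσ ⊢
      funext k
      have := congrFun hσ (τ⁻¹ k)
      simpa using this
    · intro a _ b _ h; simpa using h
    · intro b hb
      simp only [Finset.mem_filter, Finset.mem_univ, true_and] at hb
      refine ⟨b * τ, ?_, by simp⟩
      simp only [Finset.mem_filter, Finset.mem_univ, true_and]
      funext k
      have := congrFun hb (τ k)
      simpa using this
  rw [Finset.sum_congr rfl h2, Finset.sum_const, smul_eq_mul, Finset.card_univ,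
    Fintype.card_perm, Fintype.card_fin] at h1
  have h4 := Nat.multinomial_spec (suppIdx jh) (multIdx jh)
  rw [sum_multIdx] at h4
  have hpos : 0 < ∏ p ∈ suppIdx jh, (multIdx jh p).factorial :=
    Finset.prod_pos fun q _ => Nat.factorial_pos _
  refine Nat.eq_of_mul_eq_mul_right hpos ?_
  rw [← h1, ← h4, mul_comm]; rfl

open scoped Classical in
lemma sum_sorted {m n : ℕ} (F : Idx m n → ℝ) (hF : IsSymmetric F) :
    ∑ j, F j = ∑ jh : Idx m n, if Monotone jh then (kCoef jh : ℝ) * F jh else 0 := by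
  rw [← Finset.sum_fiberwise Finset.univ (fun j : Idx m n => j ∘ Tuple.sort j) F]
  refine Finset.sum_congr rfl fun jh _ => ?_
  split_ifs with h
  · have : (Finset.univ.filter fun j : Idx m n => j ∘ Tuple.sort j = jh) =
        (Finset.univ : Finset (Equiv.Perm (Fin m))).image (fun σ : Equiv.Perm (Fin m) => jh ∘ σ) := by
      ext j
      simp only [Finset.mem_filter, Finset.mem_univ, true_and, Finset.mem_image]
      constructor
      · rintro rfl
        refine ⟨(Tuple.sort j)⁻¹, ?_⟩
        funext k; simp
      · rintro ⟨σ, rfl⟩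
        rw [Tuple.comp_perm_comp_sort_eq_comp_sort]
        rw [Tuple.sort_eq_refl_iff_monotone.2 h]; rfl
    rw [← card_class, ← this, ← nsmul_eq_mul, ← Finset.sum_const]
    refine Finset.sum_congr rfl fun j hj => ?_
    simp only [Finset.mem_filter, Finset.mem_univ, true_and] at hj
    rw [← hj, hF]
  · refine Finset.sum_eq_zero fun j hj => ?_
    simp only [Finset.mem_filter, Finset.mem_univ, true_and] at hj
    exact absurd (hj ▸ Tuple.monotone_sort j) h

lemma sum_mult {m n : ℕ} (hm : 0 < m) (W : Idx m n → ℝ) (hW : IsSymmetric W) (i : Fin n) :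
    ∑ j, (multIdx j i : ℝ) * W j = m * ∑ j, if j ⟨0, hm⟩ = i then W j else 0 := by
  have h1 : ∀ j : Idx m n, (multIdx j i : ℝ) * W j = ∑ k, if j k = i then W j else 0 := by
    intro j
    rw [← Finset.sum_filter, Finset.sum_const, nsmul_eq_mul]; rfl
  simp_rw [h1]
  rw [Finset.sum_comm]
  have h2 : ∀ k : Fin m, (∑ j : Idx m n, if j k = i then W j else 0) =
      ∑ j : Idx m n, if j ⟨0, hm⟩ = i then W j else 0 := by
    intro k
    refine Fintype.sum_equiv (Equiv.arrowCongr (Equiv.swap k ⟨0, hm⟩) (Equiv.refl _)) _ _ ?_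
    intro j
    have : (Equiv.arrowCongr (Equiv.swap k ⟨0, hm⟩) (Equiv.refl (Fin n))) j
        = j ∘ (Equiv.swap k ⟨0, hm⟩) := by
      funext l; simp [Equiv.arrowCongr]
    rw [this, hW]
    simp
  rw [Finset.sum_congr rfl fun k _ => h2 k]
  simp

/-- not a diagonal index -/
def ND {m n : ℕ} (j : Idx m n) : Prop := ¬ ∃ q : Fin n, j = diagIdx q

lemma ND_perm {m n : ℕ} (j : Idx m n) (σ : Equiv.Perm (Fin m)) : ND (j ∘ σ) ↔ ND j := by
  unfold ND
  refine not_congr ⟨?_, ?_⟩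
  · rintro ⟨q, hq⟩
    refine ⟨q, ?_⟩
    funext k
    have := congrFun hq (σ.symm k)
    simpa [diagIdx] using this
  · rintro ⟨q, rfl⟩
    exact ⟨q, rfl⟩

open scoped Classical in
lemma rowSum_eq {m n : ℕ} (hm : 0 < m) (A : Idx m n → ℝ) (i : Fin n) :
    rowSum hm A i = ∑ j, if j ⟨0, hm⟩ = i then (if ND j then |A j| else 0) else 0 := by
  unfold rowSum
  rw [Finset.sum_filter]
  refine Finset.sum_congr rfl fun j _ => ?_
  by_cases h : j ⟨0, hm⟩ = i
  · have : j ≠ diagIdx i ↔ ND j := by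
      unfold ND
      refine not_congr ⟨fun h => ⟨i, h⟩, ?_⟩
      rintro ⟨q, rfl⟩
      simp only [diagIdx] at h
      rw [h]
    simp [h, this]
  · simp [h]

open scoped Classical in
lemma rowSum_sorted {m n : ℕ} (hm : 0 < m) (A : Idx m n → ℝ) (hA : IsSymmetric A) (i : Fin n) :
    rowSum hm A i = ∑ jh : Idx m n, if Monotone jh ∧ ND jh ∧ i ∈ suppIdx jh then
      (mCoef jh i : ℝ) * |A jh| else 0 := by
  have hm' : (m : ℝ) ≠ 0 := by positivity
  have hW : IsSymmetric (fun j : Idx m n => if ND j then |A j| else 0) := by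
    intro σ j
    simp only [ND_perm, hA σ j]
  have h1 := sum_mult hm _ hW i
  rw [← rowSum_eq, sum_sorted] at h1
  · refine mul_left_cancel₀ hm' (h1.symm.trans ?_)
    rw [Finset.mul_sum]
    refine Finset.sum_congr rfl fun jh _ => ?_
    by_cases h : Monotone jh <;> by_cases h' : ND jh <;> by_cases h'' : i ∈ suppIdx jh
    · have := kCoef_mul h''
      have : (kCoef jh : ℝ) * multIdx jh i = m * mCoef jh i := by exact_mod_cast this
      simp only [h, h', h'', and_self, if_true]
      rw [← mul_assoc, ← mul_assoc, this]
    all_goals simp [h, h', h'']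
    right; left; exact multIdx_zero h''
  · intro σ j
    simp only [multIdx_perm, hW σ j]

lemma scaled_symm {m n : ℕ} {A : Idx m n → ℝ} (hA : IsSymmetric A) (d : Fin n → ℝ) :
    IsSymmetric (fun j => A j * ∏ k : Fin m, d (j k)) := by
  intro σ j
  simp only [hA σ j]
  congr 1
  exact Equiv.prod_comp σ (fun k => d (j k))

lemma edge_ineq {m n : ℕ} (hm : 0 < m) (jh : Idx m n) (β : Fin n → ℝ)
    (hβ : ∀ p ∈ suppIdx jh, 0 ≤ β p) (a : ℝ)
    (h : (cCoef jh : ℝ) * a ^ m ≤ ∏ p ∈ suppIdx jh, β p ^ multIdx jh p)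
    (x : Fin n → ℝ) (hx : ∀ i, 0 < x i) :
    (kCoef jh : ℝ) * (a * ∏ k, x (jh k)) ≤ ∑ p ∈ suppIdx jh, β p * x p ^ m := by
  have hm' : (0 : ℝ) < m := by exact_mod_cast hm
  have hα : ∀ p ∈ suppIdx jh, (0 : ℝ) < multIdx jh p := fun p hp => by
    exact_mod_cast multIdx_pos hp
  set z : Fin n → ℝ := fun p => β p * x p ^ m / multIdx jh p with hz
  have hz0 : ∀ p ∈ suppIdx jh, 0 ≤ z p := fun p hp =>
    div_nonneg (mul_nonneg (hβ p hp) (pow_nonneg (hx p).le _)) (hα p hp).le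
  have hsum : ∑ p ∈ suppIdx jh, β p * x p ^ m = ∑ k, z (jh k) := by
    rw [← sum_suppIdx]
    refine Finset.sum_congr rfl fun p hp => ?_
    simp only [hz]
    field_simp [(hα p hp).ne']
  set D := ∏ k, x (jh k) with hD
  have hDpos : 0 < D := Finset.prod_pos fun k _ => hx _
  -- product
  have hprod : ((kCoef jh : ℝ) / m * (a * D)) ^ m ≤ ∏ k, z (jh k) := by
    have e1 : ∀ p ∈ suppIdx jh, (mCoef jh p : ℝ) = (kCoef jh : ℝ) / m * multIdx jh p := by
      intro p hp
      have : (kCoef jh : ℝ) * multIdx jh p = m * mCoef jh p := by exact_mod_cast kCoef_mul hp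
      field_simp
      linarith
    have e2 : (cCoef jh : ℝ) = ((kCoef jh : ℝ) / m) ^ m *
        ∏ p ∈ suppIdx jh, (multIdx jh p : ℝ) ^ multIdx jh p := by
      have : (cCoef jh : ℝ) = ∏ p ∈ suppIdx jh, (mCoef jh p : ℝ) ^ multIdx jh p := by
        simp [cCoef, mCoef]
      rw [this]
      have e3 : ∏ p ∈ suppIdx jh, ((kCoef jh : ℝ) / m) ^ multIdx jh p
          = ((kCoef jh : ℝ) / m) ^ m := by
        rw [Finset.prod_pow_eq_pow_sum, sum_multIdx]
      rw [← e3, ← Finset.prod_mul_distrib]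
      refine Finset.prod_congr rfl fun p hp => ?_
      rw [e1 p hp, mul_pow]
    set Q := ∏ p ∈ suppIdx jh, (multIdx jh p : ℝ) ^ multIdx jh p with hQ
    have hQpos : 0 < Q := Finset.prod_pos fun p hp => pow_pos (hα p hp) _
    have e4 : ∏ k, z (jh k) = (∏ p ∈ suppIdx jh, β p ^ multIdx jh p) * D ^ m / Q := by
      rw [← prod_suppIdx jh z, hD, ← prod_suppIdx jh x, hQ, ← Finset.prod_pow,
        ← Finset.prod_mul_distrib, ← Finset.prod_div_distrib]
      refine Finset.prod_congr rfl fun p hp => ?_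
      simp only [hz]
      rw [div_pow, mul_pow, ← pow_mul, ← pow_mul, mul_comm m]
    rw [e4, le_div_iff₀ hQpos]
    calc ((kCoef jh : ℝ) / m * (a * D)) ^ m * Q
        = (cCoef jh : ℝ) * a ^ m * D ^ m := by rw [e2, mul_pow, mul_pow]; ring
      _ ≤ _ := mul_le_mul_of_nonneg_right h (pow_nonneg hDpos.le _)
  -- AM-GM
  have hzk : ∀ k, 0 ≤ z (jh k) := fun k => hz0 _ (mem_suppIdx jh k)
  have hAG : ∏ k, z (jh k) ≤ ((∑ k, z (jh k)) / m) ^ m := by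
    have := Real.geom_mean_le_arith_mean_weighted Finset.univ (fun _ : Fin m => (1 : ℝ) / m)
      (fun k => z (jh k)) (fun _ _ => by positivity) (by simp [hm'.ne']) (fun k _ => hzk k)
    rw [Real.finsetProd_rpow _ _ (fun k _ => hzk k), ← Finset.mul_sum] at this
    have h2 := pow_le_pow_left₀ (Real.rpow_nonneg (Finset.prod_nonneg fun k _ => hzk k) _) this m
    rw [one_div, Real.rpow_inv_natCast_pow (Finset.prod_nonneg fun k _ => hzk k) hm.ne'] at h2
    rwa [div_eq_inv_mul]
  have hfin := le_of_pow_le_pow_left₀ hm.ne'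
    (div_nonneg (Finset.sum_nonneg fun k _ => hzk k) hm'.le) (hprod.trans hAG)
  rw [hsum]
  rw [le_div_iff₀ hm'] at hfin
  calc _ = (kCoef jh : ℝ) / m * (a * D) * m := by field_simp
    _ ≤ _ := hfin

open scoped Classical in
lemma form_nonneg {m n : ℕ} (hm : 0 < m) (A : Idx m n → ℝ) (hsym : IsSymmetric A)
    (b : Idx m n → Fin n → ℝ)
    (h1 : ∀ jh : Idx m n, Monotone jh → ND jh → ∀ p ∈ suppIdx jh, 0 ≤ b jh p)
    (h2 : ∀ jh : Idx m n, Monotone jh → ND jh →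
          (cCoef jh : ℝ) * |A jh| ^ m ≤ ∏ p ∈ suppIdx jh, (b jh p) ^ multIdx jh p)
    (h3 : ∀ i : Fin n, (∑ jh : Idx m n,
            if Monotone jh ∧ ND jh ∧ i ∈ suppIdx jh then b jh i else 0) ≤ A (diagIdx i))
    (x : Fin n → ℝ) (hx : ∀ i, 0 < x i) :
    ∑ j, (if ND j then |A j| else 0) * ∏ k, x (j k) ≤ ∑ i, A (diagIdx i) * x i ^ m := by
  have hW : IsSymmetric (fun j : Idx m n => if ND j then |A j| else 0) := by
    intro σ j
    simp only [ND_perm, hsym σ j]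
  rw [sum_sorted _ (scaled_symm hW x)]
  calc _ ≤ ∑ jh : Idx m n, ∑ i, (if Monotone jh ∧ ND jh ∧ i ∈ suppIdx jh then b jh i else 0)
            * x i ^ m := by
        refine Finset.sum_le_sum fun jh _ => ?_
        by_cases hM : Monotone jh
        · by_cases hN : ND jh
          · simp only [hM, hN, if_true, true_and]
            refine (edge_ineq hm jh (b jh) (h1 jh hM hN) _ (h2 jh hM hN) x hx).trans
              (le_of_eq ?_)
            simp only [ite_mul, zero_mul]
            rw [Finset.sum_ite_mem, Finset.univ_inter]
          · simp [hN]
        · simp [hM]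
    _ = ∑ i, (∑ jh : Idx m n, if Monotone jh ∧ ND jh ∧ i ∈ suppIdx jh then b jh i else 0)
            * x i ^ m := by
        rw [Finset.sum_comm]
        simp_rw [Finset.sum_mul]
    _ ≤ _ := Finset.sum_le_sum fun i _ =>
        mul_le_mul_of_nonneg_right (h3 i) (pow_nonneg (hx i).le _)

lemma phi_bound (m : ℕ) (hm : 0 < m) (ε : ℝ) (hε : 0 < ε) (t : ℝ) :
    |t| - 2 / ε ≤ ε * Real.exp (m * t) - m * t := by
  have hm' : (1 : ℝ) ≤ m := by exact_mod_cast hm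
  have hd : 0 < 2 / ε := by positivity
  rcases le_total 0 t with h | h
  · rw [abs_of_nonneg h]
    have hs : t ≤ m * t := by nlinarith
    set s := (m : ℝ) * t
    have hs0 : 0 ≤ s := h.trans hs
    have := Real.quadratic_le_exp_of_nonneg hs0
    have h2 : ε * (s ^ 2 / 2) ≤ ε * Real.exp s :=
      mul_le_mul_of_nonneg_left (by linarith) hε.le
    have h3 : 0 ≤ ε * (s ^ 2 / 2) - 2 * s + 2 / ε := by
      have : ε * (s ^ 2 / 2) - 2 * s + 2 / ε = (ε * s - 2) ^ 2 / (2 * ε) := by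
        field_simp; ring
      rw [this]; positivity
    linarith
  · rw [abs_of_nonpos h]
    have : 0 < ε * Real.exp (m * t) := by positivity
    nlinarith

open scoped Classical in
lemma eps_step {m n : ℕ} (hm : 0 < m) (a : Fin n → ℝ) (w : Idx m n → ℝ)
    (hw : IsSymmetric w)
    (hf : ∀ x : Fin n → ℝ, (∀ i, 0 < x i) → ∑ j, w j * ∏ k, x (j k) ≤ ∑ i, a i * x i ^ m)
    (ε : ℝ) (hε : 0 < ε) :
    ∃ y : Fin n → ℝ, ∀ i,
      (∑ j : Idx m n, if j ⟨0, hm⟩ = i then w j * Real.exp (∑ k, y (j k)) else 0) ≤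
        (a i + ε) * Real.exp (m * y i) := by
  have hm' : (0 : ℝ) < m := by exact_mod_cast hm
  set F : (Fin n → ℝ) → ℝ := fun y =>
    ∑ i, ((a i + ε) * Real.exp (m * y i) - m * y i) - ∑ j, w j * Real.exp (∑ k, y (j k)) with hF
  have hcont : Continuous F := by fun_prop
  have hlow : ∀ y, ‖y‖ - n * (2 / ε) ≤ F y := by
    intro y
    have h1 := hf (fun i => Real.exp (y i)) (fun i => Real.exp_pos _)
    simp only [← Real.exp_sum, ← Real.exp_nat_mul] at h1
    have h2 : ∑ i, (|y i| - 2 / ε) ≤ ∑ i, (ε * Real.exp (m * y i) - m * y i) :=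
      Finset.sum_le_sum fun i _ => phi_bound m hm ε hε (y i)
    have h3 : ‖y‖ ≤ ∑ i, |y i| := by
      rw [pi_norm_le_iff_of_nonneg (Finset.sum_nonneg fun i _ => abs_nonneg _)]
      intro i
      exact Finset.single_le_sum (f := fun i => |y i|) (fun i _ => abs_nonneg _)
        (Finset.mem_univ i)
    rw [Finset.sum_sub_distrib] at h2
    simp only [Finset.sum_const, Finset.card_univ, Fintype.card_fin, nsmul_eq_mul] at h2
    have h4 : F y = ∑ i, (ε * Real.exp (m * y i) - m * y i) +
        (∑ i, a i * Real.exp (m * y i) - ∑ j, w j * Real.exp (∑ k, y (j k))) := by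
      simp only [hF]
      rw [← add_sub_assoc, ← Finset.sum_add_distrib]
      congr 1
      refine Finset.sum_congr rfl fun i _ => ?_
      ring
    rw [h4]
    linarith
  have htend : Filter.Tendsto F (Filter.cocompact _) Filter.atTop := by
    refine Filter.tendsto_atTop_mono hlow ?_
    exact Filter.tendsto_atTop_add_const_right _ _ (tendsto_norm_cocompact_atTop)
  obtain ⟨y, hy⟩ := hcont.exists_forall_le htend
  refine ⟨y, fun i => ?_⟩
  set v : Fin n → ℝ := Pi.single i 1 with hv
  have hder : HasDerivAt (fun t : ℝ => F (fun p => y p + t * v p))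
      (∑ p, ((a p + ε) * (Real.exp (m * y p) * (m * v p)) - m * v p) -
        ∑ j, w j * (Real.exp (∑ k, y (j k)) * ∑ k, v (j k))) 0 := by
    have hlin : ∀ p, HasDerivAt (fun t : ℝ => y p + t * v p) (v p) 0 := by
      intro p
      simpa using ((hasDerivAt_id (0 : ℝ)).mul_const (v p)).const_add (y p)
    refine HasDerivAt.sub (HasDerivAt.fun_sum fun p _ => ?_) (HasDerivAt.fun_sum fun j _ => ?_)
    · have h1 := (hlin p).const_mul (m : ℝ)
      have h2 := (h1.exp).const_mul (a p + ε)
      simpa using h2.fun_sub h1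
    · have h1 : HasDerivAt (fun t : ℝ => ∑ k, (y (j k) + t * v (j k))) (∑ k, v (j k)) 0 :=
        HasDerivAt.fun_sum fun k _ => hlin (j k)
      simpa using (h1.exp).const_mul (w j)
  have hmin : IsLocalMin (fun t : ℝ => F (fun p => y p + t * v p)) 0 := by
    refine Filter.Eventually.of_forall fun t => ?_
    simpa using hy (fun p => y p + t * v p)
  have h0 := hmin.hasDerivAt_eq_zero hder
  have hs1 : ∑ p, ((a p + ε) * (Real.exp (m * y p) * (m * v p)) - m * v p) =
      m * ((a i + ε) * Real.exp (m * y i) - 1) := by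
    rw [Finset.sum_eq_single i]
    · simp [hv]; ring
    · intro p _ hp; simp [hv, hp]
    · simp
  have hs2 : ∑ j, w j * (Real.exp (∑ k, y (j k)) * ∑ k, v (j k)) =
      ∑ j : Idx m n, (multIdx j i : ℝ) * (w j * Real.exp (∑ k, y (j k))) := by
    refine Finset.sum_congr rfl fun j _ => ?_
    have : ∑ k, v (j k) = multIdx j i := by
      simp [hv, Pi.single_apply, multIdx]
    rw [this]; ring
  have hsy : IsSymmetric (fun j : Idx m n => w j * Real.exp (∑ k, y (j k))) := by
    intro σ j
    simp only [hw σ j]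
    congr 2
    exact Equiv.sum_comp σ (fun k => y (j k))
  rw [hs1, hs2, sum_mult hm _ hsy, ← mul_sub] at h0
  have := (mul_eq_zero.1 h0).resolve_left hm'.ne'
  linarith

open scoped Classical in
lemma limit_step {m n : ℕ} (hm : 0 < m) (a : Fin n → ℝ) (w : Idx m n → ℝ)
    (hw : IsSymmetric w) (hw0 : ∀ j, 0 ≤ w j)
    (hstep : ∀ ε : ℝ, 0 < ε → ∃ y : Fin n → ℝ, ∀ i,
      (∑ j : Idx m n, if j ⟨0, hm⟩ = i then w j * Real.exp (∑ k, y (j k)) else 0) ≤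
        (a i + ε) * Real.exp (m * y i)) :
    ∃ y : Fin n → ℝ, ∀ i,
      (∑ j : Idx m n, if j ⟨0, hm⟩ = i then w j * Real.exp (∑ k, y (j k)) else 0) ≤
        a i * Real.exp (m * y i) := by
  have hm' : (0 : ℝ) < m := by exact_mod_cast hm
  let T : (Fin n → ℝ) →ₗ[ℝ] (Idx m n → ℝ) :=
    { toFun := fun y j => if w j = 0 then 0 else ∑ k, y (j k) - m * y (j ⟨0, hm⟩)
      map_add' := by
        intro y z; funext j
        simp only [Pi.add_apply, Finset.sum_add_distrib]
        split_ifs <;> ring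
      map_smul' := by
        intro c y; funext j
        simp only [Pi.smul_apply, smul_eq_mul, ← Finset.mul_sum, RingHom.id_apply]
        split_ifs <;> ring }
  have hT : ∀ y j, T y j = if w j = 0 then 0 else ∑ k, y (j k) - m * y (j ⟨0, hm⟩) :=
    fun _ _ => rfl
  let G : Fin n → (Idx m n → ℝ) → ℝ := fun i u =>
    ∑ j : Idx m n, if j ⟨0, hm⟩ = i then w j * Real.exp (u j) else 0
  have hGT : ∀ i y, (∑ j : Idx m n,
      if j ⟨0, hm⟩ = i then w j * Real.exp (∑ k, y (j k)) else 0) =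
      G i (T y) * Real.exp (m * y i) := by
    intro i y
    simp only [G]
    rw [Finset.sum_mul]
    refine Finset.sum_congr rfl fun j _ => ?_
    split_ifs with h
    · by_cases h0 : w j = 0
      · simp [h0]
      · rw [hT, if_neg h0, mul_assoc, ← Real.exp_add, h]
        congr 2; ring
    · simp
  have hGle : ∀ i y c, (∑ j : Idx m n,
      if j ⟨0, hm⟩ = i then w j * Real.exp (∑ k, y (j k)) else 0) ≤ c * Real.exp (m * y i) ↔
      G i (T y) ≤ c := by
    intro i y c
    rw [hGT, mul_le_mul_iff_left₀ (Real.exp_pos _)]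
  simp only [hGle] at hstep ⊢
  have hGc : ∀ i, Continuous (G i) := by
    intro i
    refine continuous_finsetSum _ fun j _ => ?_
    split_ifs <;> fun_prop
  -- upper bound
  obtain ⟨M, hM0, hM⟩ : ∃ M : ℝ, 0 ≤ M ∧ ∀ y, (∀ i, G i (T y) ≤ a i + 1) → ∀ j, T y j ≤ M := by
    refine ⟨∑ j : Idx m n, |Real.log ((a (j ⟨0, hm⟩) + 1) / w j)|,
      Finset.sum_nonneg fun _ _ => abs_nonneg _, ?_⟩
    intro y hy j
    refine le_trans ?_ (Finset.single_le_sum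
      (f := fun j : Idx m n => |Real.log ((a (j ⟨0, hm⟩) + 1) / w j)|)
      (fun _ _ => abs_nonneg _) (Finset.mem_univ j))
    by_cases h0 : w j = 0
    · rw [hT, if_pos h0]; exact abs_nonneg _
    · have hpos : 0 < w j := lt_of_le_of_ne (hw0 j) (Ne.symm h0)
      refine le_trans ?_ (le_abs_self _)
      have h1 : w j * Real.exp (T y j) ≤ a (j ⟨0, hm⟩) + 1 := by
        refine le_trans ?_ (hy (j ⟨0, hm⟩))
        have := Finset.single_le_sum
          (f := fun j' : Idx m n => if j' ⟨0, hm⟩ = j ⟨0, hm⟩ then w j' * Real.exp (T y j') else 0)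
          (fun j' _ => by
            split_ifs
            · exact mul_nonneg (hw0 _) (Real.exp_pos _).le
            · exact le_rfl) (Finset.mem_univ j)
        simpa [G] using this
      rw [Real.le_log_iff_exp_le (div_pos (lt_of_lt_of_le (by positivity) h1) hpos),
        le_div_iff₀ hpos]
      linarith
  -- lower bound
  have hlow : ∀ y, (∀ j, T y j ≤ M) → ∀ j, -(m * M) ≤ T y j := by
    intro y hy j
    by_cases h0 : w j = 0
    · rw [hT, if_pos h0]
      have : 0 ≤ m * M := by positivity
      linarith
    · have hsum : ∑ k, T y (j ∘ Equiv.swap ⟨0, hm⟩ k) = 0 := by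
        have : ∀ k, T y (j ∘ Equiv.swap ⟨0, hm⟩ k) = ∑ l, y (j l) - m * y (j k) := by
          intro k
          rw [hT, hw, if_neg h0]
          simp only [Function.comp, Equiv.swap_apply_left]
          rw [Equiv.sum_comp (Equiv.swap ⟨0, hm⟩ k) (fun l => y (j l))]
        simp only [this]
        rw [Finset.sum_sub_distrib, ← Finset.mul_sum]
        simp
      rw [← Finset.add_sum_erase _ _ (Finset.mem_univ (⟨0, hm⟩ : Fin m))] at hsum
      have h1 : ∑ k ∈ Finset.univ.erase (⟨0, hm⟩ : Fin m), T y (j ∘ Equiv.swap ⟨0, hm⟩ k) ≤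
          ∑ k ∈ Finset.univ.erase (⟨0, hm⟩ : Fin m), M := Finset.sum_le_sum fun k _ => hy _
      have h2 : ∑ k ∈ Finset.univ.erase (⟨0, hm⟩ : Fin m), M ≤ ∑ k : Fin m, M :=
        Finset.sum_le_sum_of_subset_of_nonneg (Finset.subset_univ _) fun _ _ _ => hM0
      have h3 : ∑ k : Fin m, M = m * M := by simp
      have h4 : T y (j ∘ Equiv.swap ⟨0, hm⟩ ⟨0, hm⟩) = T y j := by simp
      linarith
  have hε : ∀ N : ℕ, (0 : ℝ) < 1 / ((N : ℝ) + 1) := fun N => by positivity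
  choose Y hY using fun N : ℕ => hstep (1 / ((N : ℝ) + 1)) (hε N)
  have hbd : ∀ N, T (Y N) ∈ Set.Icc (fun _ : Idx m n => -(m * M)) (fun _ => M) := by
    intro N
    have hup : ∀ j, T (Y N) j ≤ M := by
      refine hM _ fun i => (hY N i).trans ?_
      have : 1 / ((N : ℝ) + 1) ≤ 1 := by
        rw [div_le_one (by positivity)]
        have : (0 : ℝ) ≤ N := by positivity
        linarith
      linarith
    exact ⟨fun j => hlow _ hup j, hup⟩
  obtain ⟨u, _, φ, hφ, hlim⟩ := isCompact_Icc.tendsto_subseq hbd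
  have hcl : IsClosed (LinearMap.range T : Set (Idx m n → ℝ)) :=
    (LinearMap.range T).closed_of_finiteDimensional
  have hu : u ∈ (LinearMap.range T : Set (Idx m n → ℝ)) :=
    hcl.mem_of_tendsto hlim (Filter.Eventually.of_forall fun N => ⟨_, rfl⟩)
  obtain ⟨y, hy⟩ := hu
  refine ⟨y, fun i => ?_⟩
  rw [hy]
  have t1 : Filter.Tendsto (fun N => G i (T (Y (φ N)))) Filter.atTop (nhds (G i u)) :=
    ((hGc i).tendsto u).comp hlim
  have t2 : Filter.Tendsto (fun N => a i + 1 / (((φ N : ℕ) : ℝ) + 1)) Filter.atTop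
      (nhds (a i + 0)) :=
    (tendsto_one_div_add_atTop_nhds_zero_nat.comp hφ.tendsto_atTop).const_add _
  rw [add_zero] at t2
  exact le_of_tendsto_of_tendsto' t1 t2 fun N => hY (φ N) i

open scoped Classical in
/-- New characterization of symmetric `H⁺`-tensors: `A` is `GDD⁺` iff there exist
nonnegative reals `b^{i⃗}_j` (for each nondecreasing non-constant multi-index `i⃗` and each
`j` appearing in `i⃗`) with `∏_k (b^{i⃗}_{j_k})^{α_k} ≥ c(i⃗) |a_{i⃗}|^m` for each such `i⃗`,
and `a_{jj…j} ≥ ∑_{i⃗ ∋ j} b^{i⃗}_j` for each `j`. -/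
theorem GDDplus_iff_powercone (m n : ℕ) (hm : 0 < m) (A : Idx m n → ℝ)
    (hsym : IsSymmetric A) :
    IsGDDplus hm A ↔
      ∃ b : Idx m n → Fin n → ℝ,
        (∀ jh : Idx m n, Monotone jh → (¬ ∃ q : Fin n, jh = diagIdx q) →
          ∀ p ∈ suppIdx jh, 0 ≤ b jh p) ∧
        (∀ jh : Idx m n, Monotone jh → (¬ ∃ q : Fin n, jh = diagIdx q) →
          (cCoef jh : ℝ) * |A jh| ^ m ≤ ∏ p ∈ suppIdx jh, (b jh p) ^ multIdx jh p) ∧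
        (∀ i : Fin n,
          (∑ jh : Idx m n,
            if Monotone jh ∧ (¬ ∃ q : Fin n, jh = diagIdx q) ∧ i ∈ suppIdx jh
            then b jh i else 0) ≤ A (diagIdx i)) := by
  constructor
  · rintro ⟨_, hdiag, d, hd, hDD⟩
    refine ⟨fun jh p => (mCoef jh p : ℝ) * |A jh * ∏ k, d (jh k)| / d p ^ m, ?_, ?_, ?_⟩
    · intro jh _ _ p _
      have := hd p
      positivity
    · intro jh _ _
      refine le_of_eq ?_
      have hD : 0 < ∏ k, d (jh k) := Finset.prod_pos fun k _ => hd _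
      have e1 : ∏ p ∈ suppIdx jh, |A jh * ∏ k, d (jh k)| ^ multIdx jh p
          = |A jh * ∏ k, d (jh k)| ^ m := by
        rw [Finset.prod_pow_eq_pow_sum, sum_multIdx]
      have e2 : ∏ p ∈ suppIdx jh, (d p ^ m) ^ multIdx jh p = (∏ k, d (jh k)) ^ m := by
        rw [← prod_suppIdx, ← Finset.prod_pow]
        refine Finset.prod_congr rfl fun p _ => ?_
        rw [← pow_mul, ← pow_mul, mul_comm]
      have e3 : (cCoef jh : ℝ) = ∏ p ∈ suppIdx jh, (mCoef jh p : ℝ) ^ multIdx jh p := by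
        simp [cCoef, mCoef]
      simp only [div_pow, mul_pow]
      rw [Finset.prod_div_distrib, Finset.prod_mul_distrib, e1, e2, ← e3, abs_mul,
        abs_of_pos hD, mul_pow]
      field_simp
    · intro i
      have h1 := hDD i
      rw [rowSum_sorted hm _ (scaled_symm hsym d) i] at h1
      have hdi : 0 < d i ^ m := pow_pos (hd i) _
      have e : |A (diagIdx i) * ∏ k : Fin m, d ((diagIdx i : Idx m n) k)|
          = A (diagIdx i) * d i ^ m := by
        simp only [diagIdx, Finset.prod_const, Finset.card_univ, Fintype.card_fin]
        exact abs_of_nonneg (mul_nonneg (hdiag i) hdi.le)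
      rw [e] at h1
      rw [← div_le_iff₀ hdi] at h1
      refine le_trans (le_of_eq ?_) h1
      rw [Finset.sum_div]
      refine Finset.sum_congr rfl fun jh _ => ?_
      by_cases h : Monotone jh ∧ ND jh ∧ i ∈ suppIdx jh
      · rw [if_pos h]
        exact if_pos h
      · rw [if_neg h, zero_div]
        exact if_neg h
  · rintro ⟨b, h1, h2, h3⟩
    have hdiag : ∀ i : Fin n, 0 ≤ A (diagIdx i) := by
      intro i
      refine le_trans (Finset.sum_nonneg fun jh _ => ?_) (h3 i)
      split_ifs with h
      · exact h1 jh h.1 h.2.1 i h.2.2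
      · exact le_rfl
    refine ⟨hsym, hdiag, ?_⟩
    have hW : IsSymmetric (fun j : Idx m n => if ND j then |A j| else 0) := by
      intro σ j
      simp only [ND_perm, hsym σ j]
    have hf := form_nonneg hm A hsym b h1 h2 (fun i => by convert h3 i)
    obtain ⟨y, hy⟩ := limit_step hm (fun i => A (diagIdx i)) _ hW
      (fun j => by split_ifs <;> positivity)
      (fun ε hε => eps_step hm (fun i => A (diagIdx i)) _ hW hf ε hε)
    refine ⟨fun i => Real.exp (y i), fun i => Real.exp_pos _, fun i => ?_⟩
    have h4 := hy i
    rw [rowSum_eq]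
    have hr : |A (diagIdx i) * ∏ k : Fin m, Real.exp (y ((diagIdx i : Idx m n) k))|
        = A (diagIdx i) * Real.exp (m * y i) := by
      simp only [diagIdx, Finset.prod_const, Finset.card_univ, Fintype.card_fin,
        ← Real.exp_nat_mul]
      exact abs_of_nonneg (mul_nonneg (hdiag i) (Real.exp_pos _).le)
    rw [hr]
    refine le_trans (le_of_eq ?_) h4
    refine Finset.sum_congr rfl fun j _ => ?_
    rw [← Real.exp_sum, abs_mul, abs_of_pos (Real.exp_pos _)]
    split_ifs <;> simp
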